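/- arXiv:2505.22212 — 2 statements merged into one kernel-verified Lean document; each statement's English description precedes it below -/
import Mathlib

section
/- Let A be an m×n integer matrix, let f_1, …, f_n : ℤ → ℝ, let l, u ∈ ℤ^n, and let S ⊆ {1,…,n} be partitioned into two disjoint sets S₁ and S₂ with S = S₁ ∪ S₂. Then for every r ∈ ℤ^m and every η ∈ ℕ, the partial optimum satisfies the min-plus convolution identity V_S(r, η) = inf { V_{S₁}(r₁, η₁) + V_{S₂}(r₂, η₂) : r₁, r₂ ∈ ℤ^m, η₁, η₂ ∈ ℕ, r₁ + r₂ = r, η₁ + η₂ = η }, where the sum is taken in ℝ ∪ {+∞} with +∞ absorbing and the infimum of the empty set is +∞. -/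
/-!
Weigh a coordinate `g i = t` by the pair `(t • A_{•,i}, |t|) ∈ ℤ^m × ℕ`: both equality constraints
then say that the total weight over `S` is `(r, η)`. Since `S₁` and `S₂` are disjoint, a vector on
`S₁ ∪ S₂` is a pair of vectors on `S₁` and on `S₂`, and its weight and cost are the sums of
theirs, so the infimum over the union splits according to the weights of the two parts. The finite
bounds keep the partial optima away from `-∞`, and so exclude the sum `-∞ + ∞`.
-/

/-- The partial optimum `V_S(r, η)`: the infimum (in `ℝ ∪ {+∞}`, modelled by
`EReal`, where the infimum of the empty set is `⊤ = +∞`) of `∑ i ∈ S, f i (g i)`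
over integer vectors `g` (only the coordinates in `S` matter) satisfying
`∑ i ∈ S, g i • A_{•,i} = r`, `l i ≤ g i ≤ u i` for all `i ∈ S`, and
`∑ i ∈ S, |g i| = η`. -/
noncomputable def partialOpt {m n : ℕ} (A : Matrix (Fin m) (Fin n) ℤ)
    (f : Fin n → ℤ → ℝ) (l u : Fin n → ℤ) (S : Finset (Fin n))
    (r : Fin m → ℤ) (η : ℕ) : EReal :=
  sInf { z : EReal | ∃ g : Fin n → ℤ,
    (∀ j, ∑ i ∈ S, g i * A j i = r j) ∧
    (∀ i ∈ S, l i ≤ g i ∧ g i ≤ u i) ∧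
    (∑ i ∈ S, |g i| = (η : ℤ)) ∧
    z = ((∑ i ∈ S, f i (g i) : ℝ) : EReal) }

section SeparableOpt

variable {ι α M : Type*} [AddCommMonoid M]

/-- The constraints of a separable program on the coordinates in `S`: each `g i` lies in its domain
`D i`, and the total weight, in an arbitrary commutative monoid, is `x`. As in `partialOpt`, `g` is
defined on all of `ι`, and its values outside `S` are unconstrained. -/
structure IsFeasible (w : ι → α → M) (D : ι → Set α) (S : Finset ι) (x : M) (g : ι → α) :
    Prop where
  mem_domain : ∀ i ∈ S, g i ∈ D i
  sum_weight : ∑ i ∈ S, w i (g i) = x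

/-- The optimal value in `ℝ ∪ {±∞}` of the separable program with costs `f` on the coordinates in
`S`, as a function of the prescribed total weight `x`. It abstracts `partialOpt`, whose weights are
`columnWeight`. -/
noncomputable def separableOpt (f : ι → α → ℝ) (w : ι → α → M) (D : ι → Set α) (S : Finset ι)
    (x : M) : EReal :=
  ⨅ (g : ι → α) (_ : IsFeasible w D S x g), ((∑ i ∈ S, f i (g i) : ℝ) : EReal)

variable {f : ι → α → ℝ} {w : ι → α → M} {D : ι → Set α} {S S₁ S₂ T : Finset ι} {x x₁ x₂ : M}
  {g g₁ g₂ : ι → α}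

theorem IsFeasible.restrict (hg : IsFeasible w D T x g) (hST : S ⊆ T) :
    IsFeasible w D S (∑ i ∈ S, w i (g i)) g :=
  ⟨fun i hi => hg.mem_domain i (hST hi), rfl⟩

theorem sum_union_piecewise [DecidableEq ι] (hdisj : Disjoint S₁ S₂) (F : ι → α → M) :
    ∑ i ∈ S₁ ∪ S₂, F i (S₁.piecewise g₁ g₂ i) =
      ∑ i ∈ S₁, F i (g₁ i) + ∑ i ∈ S₂, F i (g₂ i) := by
  rw [Finset.sum_union hdisj]
  congr 1
  · exact Finset.sum_congr rfl fun i hi => by rw [S₁.piecewise_eq_of_mem _ _ hi]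
  · exact Finset.sum_congr rfl fun i hi => by
      rw [S₁.piecewise_eq_of_notMem _ _ (Finset.disjoint_right.mp hdisj hi)]

theorem IsFeasible.piecewise [DecidableEq ι] (hdisj : Disjoint S₁ S₂)
    (h₁ : IsFeasible w D S₁ x₁ g₁) (h₂ : IsFeasible w D S₂ x₂ g₂) :
    IsFeasible w D (S₁ ∪ S₂) (x₁ + x₂) (S₁.piecewise g₁ g₂) where
  mem_domain i hi := by
    by_cases hi₁ : i ∈ S₁
    · rw [S₁.piecewise_eq_of_mem _ _ hi₁]
      exact h₁.mem_domain i hi₁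
    · rw [S₁.piecewise_eq_of_notMem _ _ hi₁]
      exact h₂.mem_domain i ((Finset.mem_union.mp hi).resolve_left hi₁)
  sum_weight := by rw [sum_union_piecewise hdisj, h₁.sum_weight, h₂.sum_weight]

theorem separableOpt_le (hg : IsFeasible w D S x g) :
    separableOpt f w D S x ≤ ((∑ i ∈ S, f i (g i) : ℝ) : EReal) :=
  iInf₂_le g hg

theorem separableOpt_lt_iff {a : EReal} :
    separableOpt f w D S x < a ↔
      ∃ g, IsFeasible w D S x g ∧ ((∑ i ∈ S, f i (g i) : ℝ) : EReal) < a := by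
  simp only [separableOpt, iInf_lt_iff, exists_prop]

theorem separableOpt_ne_bot (hbdd : ∀ i ∈ S, BddBelow (f i '' D i)) :
    separableOpt f w D S x ≠ ⊥ := by
  choose! c hc using hbdd
  have sum_le_opt : ((∑ i ∈ S, c i : ℝ) : EReal) ≤ separableOpt f w D S x :=
    le_iInf₂ fun g hg => EReal.coe_le_coe_iff.mpr <| Finset.sum_le_sum fun i hi =>
      hc i hi (Set.mem_image_of_mem _ (hg.mem_domain i hi))
  exact ((EReal.bot_lt_coe _).trans_le sum_le_opt).ne'

theorem separableOpt_union_le_add [DecidableEq ι] (hdisj : Disjoint S₁ S₂)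
    (h₁ : separableOpt f w D S₁ x₁ ≠ ⊥) (h₂ : separableOpt f w D S₂ x₂ ≠ ⊥) :
    separableOpt f w D (S₁ ∪ S₂) (x₁ + x₂) ≤
      separableOpt f w D S₁ x₁ + separableOpt f w D S₂ x₂ := by
  refine EReal.le_add_of_forall_gt (.inl h₁) (.inr h₂) fun a ha b hb => ?_
  obtain ⟨g₁, hg₁, hcost₁⟩ := separableOpt_lt_iff.mp ha
  obtain ⟨g₂, hg₂, hcost₂⟩ := separableOpt_lt_iff.mp hb
  calc separableOpt f w D (S₁ ∪ S₂) (x₁ + x₂)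
      ≤ ((∑ i ∈ S₁ ∪ S₂, f i (S₁.piecewise g₁ g₂ i) : ℝ) : EReal) :=
        separableOpt_le (hg₁.piecewise hdisj hg₂)
    _ = ((∑ i ∈ S₁, f i (g₁ i) : ℝ) : EReal) + ((∑ i ∈ S₂, f i (g₂ i) : ℝ) : EReal) := by
        rw [sum_union_piecewise hdisj, EReal.coe_add]
    _ ≤ a + b := add_le_add hcost₁.le hcost₂.le

theorem IsFeasible.exists_separableOpt_add_le [DecidableEq ι] (hdisj : Disjoint S₁ S₂)
    (hg : IsFeasible w D (S₁ ∪ S₂) x g) :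
    ∃ x₁ x₂, x₁ + x₂ = x ∧ separableOpt f w D S₁ x₁ + separableOpt f w D S₂ x₂ ≤
      ((∑ i ∈ S₁ ∪ S₂, f i (g i) : ℝ) : EReal) := by
  refine ⟨∑ i ∈ S₁, w i (g i), ∑ i ∈ S₂, w i (g i), ?_, ?_⟩
  · rw [← Finset.sum_union hdisj, hg.sum_weight]
  · rw [Finset.sum_union hdisj, EReal.coe_add]
    exact add_le_add (separableOpt_le (hg.restrict Finset.subset_union_left))
      (separableOpt_le (hg.restrict Finset.subset_union_right))

theorem partialOpt_convolution_general [DecidableEq ι] (hdisj : Disjoint S₁ S₂)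
    (hbdd : ∀ i ∈ S₁ ∪ S₂, BddBelow (f i '' D i)) (x : M) :
    separableOpt f w D (S₁ ∪ S₂) x =
      sInf {z : EReal | ∃ x₁ x₂ : M,
        x₁ + x₂ = x ∧ z = separableOpt f w D S₁ x₁ + separableOpt f w D S₂ x₂} := by
  apply le_antisymm
  · apply le_sInf
    rintro _ ⟨x₁, x₂, rfl, rfl⟩
    exact separableOpt_union_le_add hdisj
      (separableOpt_ne_bot fun i hi => hbdd i (Finset.mem_union_left _ hi))
      (separableOpt_ne_bot fun i hi => hbdd i (Finset.mem_union_right _ hi))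
  · refine le_iInf₂ fun g hg => ?_
    obtain ⟨x₁, x₂, hx, hle⟩ := hg.exists_separableOpt_add_le hdisj
    exact sInf_le_of_le ⟨x₁, x₂, hx, rfl⟩ hle

end SeparableOpt

section PartialOpt

variable {m n : ℕ} {A : Matrix (Fin m) (Fin n) ℤ} {f : Fin n → ℤ → ℝ} {l u : Fin n → ℤ}
  {S : Finset (Fin n)} {r : Fin m → ℤ} {η : ℕ}

/-- The weight `(t • A_{•,i}, |t|)` of the value `t` in coordinate `i`, which merges the two
equality constraints of `partialOpt` into one. -/
def columnWeight (A : Matrix (Fin m) (Fin n) ℤ) (i : Fin n) (t : ℤ) : (Fin m → ℤ) × ℕ :=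
  (fun j => t * A j i, t.natAbs)

theorem sum_columnWeight_eq_iff {g : Fin n → ℤ} :
    ∑ i ∈ S, columnWeight A i (g i) = (r, η) ↔
      (∀ j, ∑ i ∈ S, g i * A j i = r j) ∧ ∑ i ∈ S, |g i| = (η : ℤ) := by
  simp only [columnWeight, Prod.ext_iff, Prod.fst_sum, Prod.snd_sum, funext_iff, Finset.sum_apply,
    ← Nat.cast_inj (R := ℤ), Nat.cast_sum, Int.natCast_natAbs]

theorem partialOpt_eq_separableOpt :
    partialOpt A f l u S r η =
      separableOpt f (columnWeight A) (fun i => Set.Icc (l i) (u i)) S (r, η) := by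
  refine le_antisymm (le_iInf₂ fun g hg => ?_) (le_sInf ?_)
  · obtain ⟨hr, hη⟩ := sum_columnWeight_eq_iff.mp hg.sum_weight
    exact sInf_le ⟨g, hr, hg.mem_domain, hη, rfl⟩
  · rintro _ ⟨g, hr, hbounds, hη, rfl⟩
    exact separableOpt_le ⟨hbounds, sum_columnWeight_eq_iff.mpr ⟨hr, hη⟩⟩

end PartialOpt

/-- If `S` is partitioned into disjoint sets `S₁` and `S₂`,
then for every `r ∈ ℤ^m` and `η ∈ ℕ` the partial optimum satisfies the
min-plus convolution identity
`V_S(r, η) = inf { V_{S₁}(r₁, η₁) + V_{S₂}(r₂, η₂) : r₁ + r₂ = r, η₁ + η₂ = η }`,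
where addition is in `ℝ ∪ {+∞}` (with `+∞` absorbing) and the infimum of the
empty set is `+∞`. -/
theorem partialOpt_convolution {m n : ℕ}
    (A : Matrix (Fin m) (Fin n) ℤ) (f : Fin n → ℤ → ℝ) (l u : Fin n → ℤ)
    (S S₁ S₂ : Finset (Fin n)) (hdisj : Disjoint S₁ S₂) (hunion : S = S₁ ∪ S₂)
    (r : Fin m → ℤ) (η : ℕ) :
    partialOpt A f l u S r η =
      sInf { z : EReal | ∃ (r₁ r₂ : Fin m → ℤ) (η₁ η₂ : ℕ),
        r₁ + r₂ = r ∧ η₁ + η₂ = η ∧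
        z = partialOpt A f l u S₁ r₁ η₁ + partialOpt A f l u S₂ r₂ η₂ } := by
  subst hunion
  rw [partialOpt_eq_separableOpt, partialOpt_convolution_general hdisj fun i _ =>
    ((Set.finite_Icc (l i) (u i)).image (f i)).bddBelow]
  simp only [partialOpt_eq_separableOpt, Prod.exists, Prod.mk_add_mk, Prod.mk.injEq, and_assoc,
    exists_comm (α := ℕ) (β := Fin m → ℤ)]
end

section
/- Let A be an m×n integer matrix with Δ = max_{i,j}|A_{i,j}|, let f_1, …, f_n : ℤ → ℝ, let l, u ∈ ℤ^n, and let S ⊆ {1,…,n} be partitioned into disjoint sets S₁ and S₂. Then for every r ∈ ℤ^m and η ∈ ℕ, the infimum in the min-plus convolution identity may be restricted to the finite index set where ‖r₁‖_∞ ≤ η₁Δ and ‖r₂‖_∞ ≤ η₂Δ; that is, V_S(r, η) = min { V_{S₁}(r₁, η₁) + V_{S₂}(r₂, η₂) : η₁ + η₂ = η, r₁ + r₂ = r, ‖r₁‖_∞ ≤ η₁Δ, ‖r₂‖_∞ ≤ η₂Δ }, with the convention that the minimum over the empty set, or over only +∞ values, is +∞. -/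
/-!
Vectors feasible for `S₁` and `S₂` glue to one feasible for the disjoint union, with `r` and `η`
adding up, and conversely a vector feasible for the union is feasible for both parts. In the
second direction the residuals `r₁, r₂` satisfy `‖rₖ‖_∞ ≤ ηₖ Δ` by the triangle inequality, so
restricting the convolution to such pairs loses nothing. The first direction also needs the
optima to be attained whenever they are not `⊤`, which holds because the box constraints leave
only finitely many values of the objective.
-/

theorem finite_image_sum_pi {ι M : Type*} {α : ι → Type*} [AddCommMonoid M] (S : Finset ι)
    (f : ∀ i, α i → M) {t : ∀ i, Set (α i)} (ht : ∀ i ∈ S, (t i).Finite) :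
    ((fun g : ∀ i, α i ↦ ∑ i ∈ S, f i (g i)) '' (S : Set ι).pi t).Finite := by
  have hfin : (Set.univ.pi fun i : S ↦ t i).Finite := Set.Finite.pi fun i ↦ ht i i.2
  refine (hfin.image fun h ↦ ∑ i : S, f i (h i)).subset ?_
  rintro _ ⟨g, hg, rfl⟩
  exact ⟨fun i ↦ g i, fun i _ ↦ hg i i.2, Finset.sum_coe_sort S fun i ↦ f i (g i)⟩

/-- The constraints on `g` in the definition of `V_S(r, η)`. Only the coordinates of `g` in `S`
are constrained, so that one vector can be feasible for several index sets. -/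
structure IsFeasible_s3 {κ ι : Type*} (A : Matrix κ ι ℤ) (l u : ι → ℤ) (S : Finset ι)
    (r : κ → ℤ) (η : ℕ) (g : ι → ℤ) : Prop where
  sum_mul_eq (j : κ) : ∑ i ∈ S, g i * A j i = r j
  mem_Icc : ∀ i ∈ S, g i ∈ Set.Icc (l i) (u i)
  sum_abs_eq : ∑ i ∈ S, |g i| = η

namespace IsFeasible_s3

variable {κ ι : Type*} {A : Matrix κ ι ℤ} {l u : ι → ℤ} {S S₁ S₂ : Finset ι}
  {r r₁ r₂ : κ → ℤ} {η η₁ η₂ : ℕ} {g g' : ι → ℤ}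

theorem of_mem_Icc (hg : ∀ i ∈ S, g i ∈ Set.Icc (l i) (u i)) :
    IsFeasible_s3 A l u S (fun j ↦ ∑ i ∈ S, g i * A j i) (∑ i ∈ S, (g i).natAbs) g where
  sum_mul_eq _ := rfl
  mem_Icc := hg
  sum_abs_eq := by push_cast; rfl

theorem congr (hg : IsFeasible_s3 A l u S r η g) (h : ∀ i ∈ S, g' i = g i) :
    IsFeasible_s3 A l u S r η g' where
  sum_mul_eq j := by
    rw [← hg.sum_mul_eq j]
    exact Finset.sum_congr rfl fun i hi ↦ by rw [h i hi]
  mem_Icc i hi := by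
    rw [h i hi]
    exact hg.mem_Icc i hi
  sum_abs_eq := by
    rw [← hg.sum_abs_eq]
    exact Finset.sum_congr rfl fun i hi ↦ by rw [h i hi]

theorem abs_apply_le (hg : IsFeasible_s3 A l u S r η g) {Δ : ℤ} {j : κ}
    (hΔ : ∀ i ∈ S, |A j i| ≤ Δ) : |r j| ≤ η * Δ :=
  calc |r j| = |∑ i ∈ S, g i * A j i| := by rw [hg.sum_mul_eq]
    _ ≤ ∑ i ∈ S, |g i * A j i| := Finset.abs_sum_le_sum_abs _ _
    _ = ∑ i ∈ S, |g i| * |A j i| := by simp only [abs_mul]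
    _ ≤ ∑ i ∈ S, |g i| * Δ := by
      gcongr with i hi
      exact hΔ i hi
    _ = η * Δ := by rw [← Finset.sum_mul, hg.sum_abs_eq]

variable [DecidableEq ι]

theorem union (hdisj : Disjoint S₁ S₂) (h₁ : IsFeasible_s3 A l u S₁ r₁ η₁ g)
    (h₂ : IsFeasible_s3 A l u S₂ r₂ η₂ g) :
    IsFeasible_s3 A l u (S₁ ∪ S₂) (r₁ + r₂) (η₁ + η₂) g where
  sum_mul_eq j := by
    rw [Finset.sum_union hdisj, h₁.sum_mul_eq, h₂.sum_mul_eq, Pi.add_apply]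
  mem_Icc i hi := (Finset.mem_union.1 hi).elim (h₁.mem_Icc i) (h₂.mem_Icc i)
  sum_abs_eq := by
    rw [Finset.sum_union hdisj, h₁.sum_abs_eq, h₂.sum_abs_eq, Nat.cast_add]

theorem exists_of_union (hdisj : Disjoint S₁ S₂) (hg : IsFeasible_s3 A l u (S₁ ∪ S₂) r η g) :
    ∃ r₁ r₂ η₁ η₂, r₁ + r₂ = r ∧ η₁ + η₂ = η ∧
      IsFeasible_s3 A l u S₁ r₁ η₁ g ∧ IsFeasible_s3 A l u S₂ r₂ η₂ g := by
  have h₁ := of_mem_Icc (A := A) fun i hi ↦ hg.mem_Icc i (Finset.mem_union_left S₂ hi)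
  have h₂ := of_mem_Icc (A := A) fun i hi ↦ hg.mem_Icc i (Finset.mem_union_right S₁ hi)
  have h := h₁.union hdisj h₂
  refine ⟨_, _, _, _, ?_, ?_, h₁, h₂⟩
  · ext j
    rw [← h.sum_mul_eq j, hg.sum_mul_eq j]
  · exact_mod_cast h.sum_abs_eq.symm.trans hg.sum_abs_eq

end IsFeasible_s3

section PartialOpt

variable {m n : ℕ} (A : Matrix (Fin m) (Fin n) ℤ) (f : Fin n → ℤ → ℝ) (l u : Fin n → ℤ)
  {S S₁ S₂ : Finset (Fin n)} {r : Fin m → ℤ} {η : ℕ}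

theorem partialOpt_eq_sInf_image :
    partialOpt A f l u S r η =
      sInf ((fun g ↦ ((∑ i ∈ S, f i (g i) : ℝ) : EReal)) '' {g | IsFeasible_s3 A l u S r η g}) := by
  refine congrArg sInf (Set.ext fun z ↦ ?_)
  constructor
  · rintro ⟨g, hr, hb, hη, rfl⟩
    exact ⟨g, ⟨hr, hb, hη⟩, rfl⟩
  · rintro ⟨g, ⟨hr, hb, hη⟩, rfl⟩
    exact ⟨g, hr, hb, hη, rfl⟩

variable {A l u} in
theorem IsFeasible_s3.partialOpt_le {g : Fin n → ℤ} (hg : IsFeasible_s3 A l u S r η g) :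
    partialOpt A f l u S r η ≤ ((∑ i ∈ S, f i (g i) : ℝ) : EReal) := by
  rw [partialOpt_eq_sInf_image]
  exact sInf_le (Set.mem_image_of_mem _ hg)

variable {A f l u} in
theorem exists_isFeasible_partialOpt_eq (h : partialOpt A f l u S r η ≠ ⊤) :
    ∃ g, IsFeasible_s3 A l u S r η g ∧
      partialOpt A f l u S r η = ((∑ i ∈ S, f i (g i) : ℝ) : EReal) := by
  rw [partialOpt_eq_sInf_image] at h ⊢
  set V := (fun g ↦ ((∑ i ∈ S, f i (g i) : ℝ) : EReal)) '' {g | IsFeasible_s3 A l u S r η g}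
  have hne : V.Nonempty := by
    refine Set.nonempty_iff_ne_empty.2 fun hV ↦ ?_
    exact h (by rw [hV, sInf_empty])
  have hfin : V.Finite := by
    refine ((finite_image_sum_pi S f fun i _ ↦ Set.finite_Icc (l i) (u i)).image
      Real.toEReal).subset ?_
    rintro _ ⟨g, hg, rfl⟩
    exact Set.mem_image_of_mem _ ⟨g, hg.mem_Icc, rfl⟩
  obtain ⟨g, hg, hgV⟩ := hne.csInf_mem hfin
  exact ⟨g, hg, hgV.symm⟩

theorem partialOpt_ne_bot : partialOpt A f l u S r η ≠ ⊥ := by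
  intro hbot
  obtain ⟨g, -, hg⟩ := exists_isFeasible_partialOpt_eq (hbot.trans_ne bot_ne_top)
  exact EReal.coe_ne_bot _ (hg.symm.trans hbot)

theorem partialOpt_union_le (hdisj : Disjoint S₁ S₂) (r₁ r₂ : Fin m → ℤ) (η₁ η₂ : ℕ) :
    partialOpt A f l u (S₁ ∪ S₂) (r₁ + r₂) (η₁ + η₂) ≤
      partialOpt A f l u S₁ r₁ η₁ + partialOpt A f l u S₂ r₂ η₂ := by
  -- `⊤ + ⊥ = ⊥` in `EReal`, so an infinite summand only settles the matter if the other is not `⊥`.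
  by_cases htop₁ : partialOpt A f l u S₁ r₁ η₁ = ⊤
  · rw [htop₁, EReal.top_add_of_ne_bot (partialOpt_ne_bot A f l u)]
    exact le_top
  by_cases htop₂ : partialOpt A f l u S₂ r₂ η₂ = ⊤
  · rw [htop₂, EReal.add_top_of_ne_bot (partialOpt_ne_bot A f l u)]
    exact le_top
  obtain ⟨g₁, hg₁, hopt₁⟩ := exists_isFeasible_partialOpt_eq htop₁
  obtain ⟨g₂, hg₂, hopt₂⟩ := exists_isFeasible_partialOpt_eq htop₂
  let g := S₁.piecewise g₁ g₂
  have heq₁ : ∀ i ∈ S₁, g i = g₁ i := fun i hi ↦ S₁.piecewise_eq_of_mem g₁ g₂ hi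
  have heq₂ : ∀ i ∈ S₂, g i = g₂ i := fun i hi ↦
    S₁.piecewise_eq_of_notMem g₁ g₂ (Finset.disjoint_right.1 hdisj hi)
  calc partialOpt A f l u (S₁ ∪ S₂) (r₁ + r₂) (η₁ + η₂)
    _ ≤ ((∑ i ∈ S₁ ∪ S₂, f i (g i) : ℝ) : EReal) :=
      ((hg₁.congr heq₁).union hdisj (hg₂.congr heq₂)).partialOpt_le f
    _ = ((∑ i ∈ S₁, f i (g₁ i) : ℝ) : EReal) + ((∑ i ∈ S₂, f i (g₂ i) : ℝ) : EReal) := by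
      rw [Finset.sum_union hdisj, EReal.coe_add,
        Finset.sum_congr rfl fun i hi ↦ congrArg (f i) (heq₁ i hi),
        Finset.sum_congr rfl fun i hi ↦ congrArg (f i) (heq₂ i hi)]
    _ = partialOpt A f l u S₁ r₁ η₁ + partialOpt A f l u S₂ r₂ η₂ := by rw [hopt₁, hopt₂]

end PartialOpt

/-- With `Δ` bounding the absolute values of the entries of
`A` (in particular `Δ = ‖A‖_∞`), and `S` partitioned into disjoint `S₁, S₂`,
the infimum in the min-plus convolution identity may be restricted to the
(finite) index set where `‖r₁‖_∞ ≤ η₁·Δ` and `‖r₂‖_∞ ≤ η₂·Δ`: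
`V_S(r, η) = min { V_{S₁}(r₁, η₁) + V_{S₂}(r₂, η₂) : η₁ + η₂ = η, r₁ + r₂ = r,
‖r₁‖_∞ ≤ η₁Δ, ‖r₂‖_∞ ≤ η₂Δ }`, the minimum over the empty set being `+∞`. -/
theorem partialOpt_convolution_restricted {m n : ℕ}
    (A : Matrix (Fin m) (Fin n) ℤ) (Δ : ℤ) (hΔ : ∀ i j, |A i j| ≤ Δ)
    (f : Fin n → ℤ → ℝ) (l u : Fin n → ℤ)
    (S S₁ S₂ : Finset (Fin n)) (hdisj : Disjoint S₁ S₂) (hunion : S = S₁ ∪ S₂)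
    (r : Fin m → ℤ) (η : ℕ) :
    partialOpt A f l u S r η =
      sInf { z : EReal | ∃ (r₁ r₂ : Fin m → ℤ) (η₁ η₂ : ℕ),
        r₁ + r₂ = r ∧ η₁ + η₂ = η ∧
        (∀ j, |r₁ j| ≤ (η₁ : ℤ) * Δ) ∧
        (∀ j, |r₂ j| ≤ (η₂ : ℤ) * Δ) ∧
        z = partialOpt A f l u S₁ r₁ η₁ + partialOpt A f l u S₂ r₂ η₂ } := by
  subst hunion
  apply le_antisymm
  · refine le_sInf ?_
    rintro _ ⟨r₁, r₂, η₁, η₂, rfl, rfl, -, -, rfl⟩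
    exact partialOpt_union_le A f l u hdisj r₁ r₂ η₁ η₂
  · rw [partialOpt_eq_sInf_image]
    refine le_sInf ?_
    rintro _ ⟨g, hg, rfl⟩
    obtain ⟨r₁, r₂, η₁, η₂, hr, hη, h₁, h₂⟩ := hg.exists_of_union hdisj
    have hle : partialOpt A f l u S₁ r₁ η₁ + partialOpt A f l u S₂ r₂ η₂ ≤
        ((∑ i ∈ S₁ ∪ S₂, f i (g i) : ℝ) : EReal) := by
      rw [Finset.sum_union hdisj, EReal.coe_add]
      exact add_le_add (h₁.partialOpt_le f) (h₂.partialOpt_le f)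
    exact sInf_le_of_le ⟨r₁, r₂, η₁, η₂, hr, hη, fun j ↦ h₁.abs_apply_le fun i _ ↦ hΔ j i,
      fun j ↦ h₂.abs_apply_le fun i _ ↦ hΔ j i, rfl⟩ hle
end
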